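/- Let A = (a_n^k) and B = (b_n^k) be Köthe matrices and ℓ a Banach sequence space with monotone norm. Then every continuous linear operator from λ(A) to λ^ℓ(B) is bounded (i.e., (λ(A), λ^ℓ(B)) ∈ 𝓑) if and only if for every function N : ℕ → ℕ there exists N₀ ∈ ℕ such that for each r ∈ ℕ there exist k₀ ∈ ℕ and C > 0 with b_v^r / a_i^{N₀} ≤ C · max_{1 ≤ k ≤ k₀} (b_v^k / a_i^{N(k)}) for all v ∈ ℕ and i ∈ ℕ. -/

import Mathlib

/-!
For sufficiency, let `T` be continuous with `‖T‖_{k, N(k)} < ∞`. The inequality, multiplied by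
`|(T e_i)_v|`, dominates the sequence defining `‖T e_i‖_r` by a finite combination of those
defining `‖T e_i‖_k`, `k ≤ k₀`; monotonicity of the norm of `ℓ` then gives
`‖T e_i‖_r ≤ D a_i^{N₀}` (`image_unit_bound`). Since finitely supported sequences are dense in
`λ(A)` and its seminorms are weighted `ℓ¹` norms, this yields `‖T‖_{r, N₀} ≤ D`
(`bound_of_image_unit`).

For necessity, suppose the condition fails for some `N`, and let `r(n)` be an index that violates
it when `N₀ = n`. A gliding-hump operator `T = ∑ₛ tₛ e^*_{iₛ} ⊗ e_{vₛ}` (`humpOp`) is built, where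
`(vₛ, iₛ)` violates the inequality for `N₀ = (unpair s).1` with `C = 4ˢ` and `k₀ = s + 1`, and `tₛ`
makes `max_{1 ≤ k ≤ s + 1} tₛ b_{vₛ}^k / a_{iₛ}^{N(k)}` equal to `2⁻ˢ`. For each `k ≥ 1` the numbers
`tₛ b_{vₛ}^k / a_{iₛ}^{N(k)}` are then summable, so `T` is continuous. As all `tₛ` are positive,
nothing cancels in `T e_{iₛ}`, hence `‖T e_{iₛ}‖_r / a_{iₛ}^n ≥ 2ˢ` for `r = r(n)` and the infinitely
many `s` with `(unpair s).1 = n`, so that `‖T‖_{r(n), n} = ∞` for every `n`.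
-/

open scoped ENNReal BigOperators

/-- The `n`-th canonical unit sequence in `ℝ^ℕ`. -/
def eSeq (n : ℕ) : ℕ → ℝ := fun m => if m = n then 1 else 0

/-- Unconditional (finite-partial-sums) convergence of the series `∑ n, f n` to `y`,
with respect to the norm `nn`. -/
def HasSumIn (nn : (ℕ → ℝ) → ℝ) (f : ℕ → ℕ → ℝ) (y : ℕ → ℝ) : Prop :=
  ∀ ε : ℝ, 0 < ε → ∃ F : Finset ℕ, ∀ G : Finset ℕ, F ⊆ G → nn ((∑ n ∈ G, f n) - y) < ε

/-- A Banach sequence space with a monotone norm in which the canonical system `(eSeq n)`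
is an unconditional basis. -/
structure MonoBanachSeqSpace where
  mem : (ℕ → ℝ) → Prop
  nrm : (ℕ → ℝ) → ℝ
  mem_zero : mem 0
  mem_add : ∀ {x y}, mem x → mem y → mem (x + y)
  mem_smul : ∀ (c : ℝ) {x}, mem x → mem (c • x)
  nrm_nonneg : ∀ x, mem x → 0 ≤ nrm x
  nrm_eq_zero_iff : ∀ {x}, mem x → (nrm x = 0 ↔ x = 0)
  nrm_add_le : ∀ {x y}, mem x → mem y → nrm (x + y) ≤ nrm x + nrm y
  nrm_smul : ∀ (c : ℝ) {x}, mem x → nrm (c • x) = |c| * nrm x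
  complete : ∀ u : ℕ → ℕ → ℝ, (∀ n, mem (u n)) →
    (∀ ε : ℝ, 0 < ε → ∃ M, ∀ p q, M ≤ p → M ≤ q → nrm (u p - u q) < ε) →
    ∃ x, mem x ∧ ∀ ε : ℝ, 0 < ε → ∃ M, ∀ p, M ≤ p → nrm (u p - x) < ε
  mem_e : ∀ n, mem (eSeq n)
  nrm_e : ∀ n, nrm (eSeq n) = 1
  mem_mul : ∀ (β : ℕ → ℝ) {x}, mem x → (∀ n, |β n| ≤ 1) → mem fun n => β n * x n
  expand : ∀ {x : ℕ → ℝ} (β : ℕ → ℝ), mem x → (∀ n, |β n| ≤ 1) →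
    HasSumIn nrm (fun n => (β n * x n) • eSeq n) (fun n => β n * x n)
  mono : ∀ {x y}, mem x → mem y → (∀ n, |x n| ≤ |y n|) → nrm x ≤ nrm y

/-- A Köthe matrix over a countable index set. -/
def IsKotheMatrix {ι : Type*} (a : ι → ℕ → ℝ) : Prop :=
  ∀ n k, 0 < a n k ∧ a n k ≤ a n (k + 1)

/-- Membership in the Köthe space `λ(a)`. -/
def memLam {ι : Type*} (a : ι → ℕ → ℝ) (x : ι → ℝ) : Prop :=
  ∀ k, Summable fun n => |x n| * a n k

/-- The `k`-th seminorm of the Köthe space `λ(a)`. -/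
noncomputable def lamNorm {ι : Type*} (a : ι → ℕ → ℝ) (k : ℕ) (x : ι → ℝ) : ℝ :=
  ∑' n, |x n| * a n k

/-- Membership in the `ℓ`-Köthe space `λ^ℓ(b)`. -/
def memLamL (l : MonoBanachSeqSpace) (b : ℕ → ℕ → ℝ) (x : ℕ → ℝ) : Prop :=
  ∀ k, l.mem fun n => x n * b n k

/-- The `k`-th seminorm of the `ℓ`-Köthe space `λ^ℓ(b)`. -/
noncomputable def lamLNorm (l : MonoBanachSeqSpace) (b : ℕ → ℕ → ℝ) (k : ℕ) (x : ℕ → ℝ) : ℝ :=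
  l.nrm fun n => x n * b n k

/-- The operator seminorm `‖T‖_{pY,pX} = sup {pY (T x) : x ∈ memX, pX x ≤ 1}`,
with values in `ℝ≥0∞`. -/
noncomputable def opSeminorm {X Y : Type*} (memX : X → Prop) (pX : X → ℝ) (pY : Y → ℝ)
    (T : X → Y) : ℝ≥0∞ :=
  ⨆ x : {x : X // memX x ∧ pX x ≤ 1}, ENNReal.ofReal (pY (T x.1))

/-- The dual seminorm `‖u‖*_k = sup {|u x| : p k x ≤ 1}` of a linear functional,
with values in `ℝ≥0∞`. -/
noncomputable def dualNorm {E : Type*} [AddCommGroup E] [Module ℝ E]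
    (p : ℕ → Seminorm ℝ E) (k : ℕ) (u : E →ₗ[ℝ] ℝ) : ℝ≥0∞ :=
  ⨆ x : {x : E // p k x ≤ 1}, ENNReal.ofReal |u x.1|

/-- `max_{1 ≤ k ≤ k₀} f k` for a real-valued `f`. -/
noncomputable def maxIcc (k₀ : ℕ) (h : 1 ≤ k₀) (f : ℕ → ℝ) : ℝ :=
  (Finset.Icc 1 k₀).sup' (Finset.nonempty_Icc.mpr h) f

/-! ### Finite sums and absolutely convergent series in `ℓ` -/

lemma mem_finsum (l : MonoBanachSeqSpace) (f : ℕ → ℕ → ℝ) (F : Finset ℕ)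
    (h : ∀ s ∈ F, l.mem (f s)) :
    l.mem (∑ s ∈ F, f s) ∧ l.nrm (∑ s ∈ F, f s) ≤ ∑ s ∈ F, l.nrm (f s) := by
  induction F using Finset.induction_on with
  | empty => simpa using ⟨l.mem_zero, le_of_eq ((l.nrm_eq_zero_iff l.mem_zero).2 rfl)⟩
  | insert s F hs ih =>
    have h1 := ih fun t ht => h t (Finset.mem_insert_of_mem ht)
    have h2 := h s (Finset.mem_insert_self _ _)
    rw [Finset.sum_insert hs, Finset.sum_insert hs]
    exact ⟨l.mem_add h2 h1.1, (l.nrm_add_le h2 h1.1).trans (by linarith [h1.2])⟩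

lemma mem_sub' (l : MonoBanachSeqSpace) {x y : ℕ → ℝ} (hx : l.mem x) (hy : l.mem y) :
    l.mem (x - y) := by
  have := l.mem_add hx (l.mem_smul (-1) hy)
  rwa [neg_one_smul, ← sub_eq_add_neg] at this

lemma nrm_smul_e (l : MonoBanachSeqSpace) (c : ℝ) (v : ℕ) : l.nrm (c • eSeq v) = |c| := by
  rw [l.nrm_smul c (l.mem_e v), l.nrm_e, mul_one]

lemma coord_le (l : MonoBanachSeqSpace) {x : ℕ → ℝ} (hx : l.mem x) (v : ℕ) :
    |x v| ≤ l.nrm x := by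
  rw [← nrm_smul_e l (x v) v]
  refine l.mono (l.mem_smul _ (l.mem_e v)) hx fun n => ?_
  by_cases h : n = v
  · subst h; simp [eSeq]
  · simp [eSeq, h]

/-- The series `∑ₛ cₛ e_{vₛ}` with `∑ₛ |cₛ| < ∞` converges in `ℓ`, and its sum is computed
coordinatewise. -/
lemma mem_series (l : MonoBanachSeqSpace) (c : ℕ → ℝ) (v : ℕ → ℕ)
    (hc : Summable fun s => |c s|) :
    l.mem (fun w => ∑' s, if v s = w then c s else 0) ∧
      l.nrm (fun w => ∑' s, if v s = w then c s else 0) ≤ ∑' s, |c s| := by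
  set u : ℕ → ℕ → ℝ := fun n => ∑ s ∈ Finset.range n, c s • eSeq (v s) with hu
  have hmem : ∀ F : Finset ℕ, l.mem (∑ s ∈ F, c s • eSeq (v s)) ∧
      l.nrm (∑ s ∈ F, c s • eSeq (v s)) ≤ ∑ s ∈ F, |c s| := by
    intro F
    have := mem_finsum l (fun s => c s • eSeq (v s)) F fun s _ => l.mem_smul _ (l.mem_e _)
    simpa only [nrm_smul_e] using this
  have hneg : ∀ x y : ℕ → ℝ, l.mem x → l.mem y → l.nrm (x - y) = l.nrm (y - x) := by
    intro x y hx hy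
    have := l.nrm_smul (-1) (mem_sub' l hx hy)
    simpa using this.symm
  have hdiff : ∀ p q, p ≤ q → l.nrm (u q - u p) ≤
      (∑ s ∈ Finset.range q, |c s|) - ∑ s ∈ Finset.range p, |c s| := by
    intro p q hpq
    rw [hu]
    simp only
    rw [← Finset.sum_Ico_eq_sub _ hpq, ← Finset.sum_Ico_eq_sub _ hpq]
    exact (hmem _).2
  have hcauchy : CauchySeq fun n => ∑ s ∈ Finset.range n, |c s| :=
    hc.hasSum.tendsto_sum_nat.cauchySeq
  obtain ⟨x, hx, hlim⟩ := l.complete u (fun n => (hmem _).1) (by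
    intro ε hε
    obtain ⟨M, hM⟩ := Metric.cauchySeq_iff.1 hcauchy ε hε
    refine ⟨M, fun p q hp hq => ?_⟩
    rcases le_total p q with h | h
    · rw [hneg _ _ (hmem _).1 (hmem _).1]
      exact (hdiff p q h).trans_lt ((le_abs_self _).trans_lt (hM q hq p hp))
    · exact (hdiff q p h).trans_lt ((le_abs_self _).trans_lt (hM p hp q hq)))
  have hxeq : (fun w => ∑' s, if v s = w then c s else 0) = x := by
    funext w
    have hs : Summable fun s => if v s = w then c s else 0 := by
      refine Summable.of_norm_bounded hc fun s => ?_
      split_ifs <;> simp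
    refine tendsto_nhds_unique hs.hasSum.tendsto_sum_nat ?_
    refine Metric.tendsto_atTop.2 fun ε hε => ?_
    obtain ⟨M, hM⟩ := hlim ε hε
    refine ⟨M, fun n hn => ?_⟩
    have h1 := (coord_le l (mem_sub' l (hmem (Finset.range n)).1 hx) w).trans_lt (hM n hn)
    have h2 : (∑ s ∈ Finset.range n, c s • eSeq (v s)) w =
        ∑ s ∈ Finset.range n, if v s = w then c s else 0 := by
      rw [Finset.sum_apply]
      refine Finset.sum_congr rfl fun s _ => ?_
      simp [eSeq, eq_comm]
    rwa [Pi.sub_apply, h2, ← Real.dist_eq] at h1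
  rw [hxeq]
  refine ⟨hx, le_of_forall_pos_le_add fun ε hε => ?_⟩
  obtain ⟨M, hM⟩ := hlim ε hε
  have h1 := hM M le_rfl
  rw [hneg _ _ (hmem _).1 hx] at h1
  have h2 := l.nrm_add_le (mem_sub' l hx (hmem (Finset.range M)).1) (hmem (Finset.range M)).1
  rw [sub_add_cancel] at h2
  have h3 : ∑ s ∈ Finset.range M, |c s| ≤ ∑' s, |c s| :=
    hc.sum_le_tsum _ fun s _ => abs_nonneg _
  have h4 := (hmem (Finset.range M)).2
  have h5 : l.nrm (x - ∑ s ∈ Finset.range M, c s • eSeq (v s)) < ε := h1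
  linarith

/-! ### The Köthe space `λ(A)` -/

lemma kothe_mono {a : ℕ → ℕ → ℝ} (ha : IsKotheMatrix a) (n : ℕ) : Monotone (a n) :=
  monotone_nat_of_le_succ fun k => (ha n k).2

lemma memLam_of_le {a : ℕ → ℕ → ℝ} (ha : IsKotheMatrix a) {x y : ℕ → ℝ} (hy : memLam a y)
    (h : ∀ n, |x n| ≤ |y n|) : memLam a x := fun k =>
  Summable.of_nonneg_of_le (fun n => mul_nonneg (abs_nonneg _) (ha n k).1.le)
    (fun n => mul_le_mul_of_nonneg_right (h n) (ha n k).1.le) (hy k)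

lemma memLam_add {a : ℕ → ℕ → ℝ} (ha : IsKotheMatrix a) {x y : ℕ → ℝ} (hx : memLam a x)
    (hy : memLam a y) : memLam a (x + y) := fun k =>
  Summable.of_nonneg_of_le (fun n => mul_nonneg (abs_nonneg _) (ha n k).1.le)
    (fun n => by
      rw [← add_mul]
      exact mul_le_mul_of_nonneg_right (abs_add_le _ _) (ha n k).1.le) ((hx k).add (hy k))

lemma memLam_smul {a : ℕ → ℕ → ℝ} {x : ℕ → ℝ} (c : ℝ) (hx : memLam a x) :
    memLam a (c • x) := fun k => by
  simpa [abs_mul, mul_assoc] using (hx k).mul_left |c|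

lemma lamNorm_smul (a : ℕ → ℕ → ℝ) (k : ℕ) (c : ℝ) (x : ℕ → ℝ) :
    lamNorm a k (c • x) = |c| * lamNorm a k x := by
  simp [lamNorm, abs_mul, mul_assoc, tsum_mul_left]

lemma coord_le_lamNorm {a : ℕ → ℕ → ℝ} (ha : IsKotheMatrix a) {x : ℕ → ℝ} (hx : memLam a x)
    (k n : ℕ) : |x n| * a n k ≤ lamNorm a k x :=
  (hx k).le_tsum n fun m _ => mul_nonneg (abs_nonneg _) (ha m k).1.le

lemma memLam_e (a : ℕ → ℕ → ℝ) (i : ℕ) : memLam a (eSeq i) := fun k =>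
  summable_of_ne_finset_zero (s := {i}) fun n hn => by
    simp only [Finset.mem_singleton] at hn
    simp [eSeq, hn]

lemma lamNorm_e (a : ℕ → ℕ → ℝ) (k i : ℕ) : lamNorm a k (eSeq i) = a i k := by
  rw [lamNorm, tsum_eq_single i fun n hn => by simp [eSeq, hn]]
  simp [eSeq]

/-- Finitely supported truncations approximate every element of `λ(A)` in each seminorm. -/
lemma exists_truncation {a : ℕ → ℕ → ℝ} (ha : IsKotheMatrix a) {x : ℕ → ℝ} (hx : memLam a x)
    (m : ℕ) {ε : ℝ} (hε : 0 < ε) :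
    ∃ F : Finset ℕ, memLam a (x - ∑ n ∈ F, x n • eSeq n) ∧
      lamNorm a m (x - ∑ n ∈ F, x n • eSeq n) ≤ ε := by
  have h := (Metric.tendsto_nhds.1 (hx m).hasSum ε hε).exists
  obtain ⟨F, hF⟩ := h
  have hrest : ∀ n, (x - ∑ n ∈ F, x n • eSeq n) n = if n ∈ F then 0 else x n := by
    intro n
    simp [eSeq, Finset.sum_apply]
    split_ifs <;> simp
  have hmem : memLam a (x - ∑ n ∈ F, x n • eSeq n) := memLam_of_le ha hx fun n => by
    rw [hrest]; split_ifs <;> simp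
  refine ⟨F, hmem, ?_⟩
  have hsplit : ∑' n, |x n| * a n m =
      lamNorm a m (x - ∑ n ∈ F, x n • eSeq n) + ∑ n ∈ F, |x n| * a n m := by
    have h0 : ∀ n ∉ F, (if n ∈ F then |x n| * a n m else 0) = 0 := fun n hn => by simp [hn]
    have h1 : ∑ n ∈ F, |x n| * a n m = ∑' n, if n ∈ F then |x n| * a n m else 0 := by
      rw [tsum_eq_sum h0]
      exact Finset.sum_congr rfl fun n hn => by simp [hn]
    rw [h1, lamNorm, ← (hmem m).tsum_add (summable_of_ne_finset_zero h0)]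
    refine tsum_congr fun n => ?_
    rw [hrest]
    split_ifs <;> simp
  rw [Real.dist_eq, abs_sub_comm] at hF
  have := (le_abs_self _).trans_lt hF
  linarith

/-! ### Operator seminorms -/

lemma opSeminorm_lt_top_of {X Y : Type*} {memX : X → Prop} {pX : X → ℝ} {pY : Y → ℝ} {T : X → Y}
    (M : ℝ) (h : ∀ x, memX x → pX x ≤ 1 → pY (T x) ≤ M) : opSeminorm memX pX pY T < ⊤ := by
  refine lt_of_le_of_lt ?_ (ENNReal.ofReal_lt_top (r := M))
  exact iSup_le fun x => ENNReal.ofReal_le_ofReal (h x.1 x.2.1 x.2.2)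

lemma bound_of_opSeminorm {X Y : Type*} {memX : X → Prop} {pX : X → ℝ} {pY : Y → ℝ} {T : X → Y}
    (h : opSeminorm memX pX pY T < ⊤) :
    ∃ M, 0 ≤ M ∧ ∀ x, memX x → pX x ≤ 1 → pY (T x) ≤ M := by
  refine ⟨(opSeminorm memX pX pY T).toReal, ENNReal.toReal_nonneg, fun x hx h1 => ?_⟩
  refine (ENNReal.ofReal_le_iff_le_toReal h.ne).1 ?_
  exact le_iSup (fun x : {x : X // memX x ∧ pX x ≤ 1} => ENNReal.ofReal (pY (T x.1))) ⟨x, hx, h1⟩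

lemma lamLNorm_smul {l : MonoBanachSeqSpace} {b : ℕ → ℕ → ℝ} {y : ℕ → ℝ} (hy : memLamL l b y)
    (c : ℝ) (k : ℕ) : lamLNorm l b k (c • y) = |c| * lamLNorm l b k y := by
  rw [lamLNorm, lamLNorm, ← l.nrm_smul c (hy k)]
  congr 1; funext n; simp [mul_assoc]

lemma lamLNorm_add {l : MonoBanachSeqSpace} {b : ℕ → ℕ → ℝ} {y z : ℕ → ℝ} (hy : memLamL l b y)
    (hz : memLamL l b z) (k : ℕ) :
    lamLNorm l b k (y + z) ≤ lamLNorm l b k y + lamLNorm l b k z := by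
  refine le_trans (le_of_eq ?_) (l.nrm_add_le (hy k) (hz k))
  rw [lamLNorm]; congr 1; funext n; simp [add_mul]

/-- A finite operator seminorm, rescaled to an arbitrary ball of `λ(A)`. -/
lemma scaled_bound {a b : ℕ → ℕ → ℝ} {l : MonoBanachSeqSpace} {T : (ℕ → ℝ) → (ℕ → ℝ)}
    (hT : ∀ x, memLam a x → memLamL l b (T x))
    (hsmul : ∀ (c : ℝ) (x), memLam a x → T (c • x) = c • T x) {m k : ℕ}
    (h : opSeminorm (memLam a) (lamNorm a m) (lamLNorm l b k) T < ⊤) :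
    ∃ M, 0 ≤ M ∧ ∀ x c, memLam a x → 0 < c → lamNorm a m x ≤ c →
      lamLNorm l b k (T x) ≤ M * c := by
  obtain ⟨M, hM, hb⟩ := bound_of_opSeminorm h
  refine ⟨M, hM, fun x c hx hc hxc => ?_⟩
  have h1 := hb (c⁻¹ • x) (memLam_smul _ hx) (by
    rw [lamNorm_smul, abs_of_pos (inv_pos.2 hc), inv_mul_le_iff₀ hc]; linarith)
  rw [hsmul _ _ hx, lamLNorm_smul (hT x hx), abs_of_pos (inv_pos.2 hc), inv_mul_le_iff₀ hc] at h1
  linarith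

/-! ### Sufficiency -/

/-- The inequality between the matrices carries bounds for `‖T e_i‖_k`, `k ≤ k₀`, over to
`‖T e_i‖_r`. -/
lemma image_unit_bound {a b : ℕ → ℕ → ℝ} (ha : IsKotheMatrix a) (hb : IsKotheMatrix b)
    {l : MonoBanachSeqSpace} {N : ℕ → ℕ} {M : ℕ → ℝ} {N₀ r k₀ i : ℕ} (hk₀ : 1 ≤ k₀) {C : ℝ}
    (hC : 0 < C)
    (hineq : ∀ v, b v r / a i N₀ ≤ C * maxIcc k₀ hk₀ fun k => b v k / a i (N k))
    {y : ℕ → ℝ} (hy : memLamL l b y) (hyM : ∀ k, lamLNorm l b k y ≤ M k * a i (N k)) :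
    lamLNorm l b r y ≤ (C * ∑ k ∈ Finset.Icc 1 k₀, M k) * a i N₀ := by
  have hpos : ∀ k, 0 < a i k := fun k => (ha i k).1
  have hcoef : ∀ k, 0 ≤ C * a i N₀ / a i (N k) := fun k =>
    div_nonneg (mul_nonneg hC.le (hpos _).le) (hpos _).le
  obtain ⟨hmem, hnrm⟩ := mem_finsum l
    (fun k => (C * a i N₀ / a i (N k)) • fun v => y v * b v k) (Finset.Icc 1 k₀)
    fun k _ => l.mem_smul _ (hy k)
  have hdom : lamLNorm l b r y ≤
      l.nrm (∑ k ∈ Finset.Icc 1 k₀, (C * a i N₀ / a i (N k)) • fun v => y v * b v k) := by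
    refine l.mono (hy r) hmem fun v => ?_
    have hsum : (∑ k ∈ Finset.Icc 1 k₀, (C * a i N₀ / a i (N k)) • fun v => y v * b v k) v =
        y v * (C * (∑ k ∈ Finset.Icc 1 k₀, b v k / a i (N k)) * a i N₀) := by
      simp only [Finset.sum_apply, Pi.smul_apply, smul_eq_mul, Finset.mul_sum, Finset.sum_mul]
      refine Finset.sum_congr rfl fun k _ => ?_
      ring
    have hnn : ∀ k ∈ Finset.Icc 1 k₀, 0 ≤ b v k / a i (N k) := fun k _ =>
      div_nonneg (hb v k).1.le (hpos _).le
    rw [hsum, abs_mul, abs_mul]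
    refine mul_le_mul_of_nonneg_left ?_ (abs_nonneg _)
    rw [abs_of_pos (hb v r).1]
    refine le_trans ?_ (le_abs_self _)
    rw [← div_le_iff₀ (hpos N₀)]
    refine (hineq v).trans (mul_le_mul_of_nonneg_left ?_ hC.le)
    exact Finset.sup'_le _ _ fun k hk => Finset.single_le_sum hnn hk
  refine hdom.trans (hnrm.trans ?_)
  rw [Finset.mul_sum, Finset.sum_mul]
  refine Finset.sum_le_sum fun k _ => ?_
  rw [l.nrm_smul _ (hy k), abs_of_nonneg (hcoef k)]
  calc C * a i N₀ / a i (N k) * lamLNorm l b k y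
      ≤ C * a i N₀ / a i (N k) * (M k * a i (N k)) :=
        mul_le_mul_of_nonneg_left (hyM k) (hcoef k)
    _ = C * M k * a i N₀ := by
        have := (hpos (N k)).ne'
        field_simp

/-- A continuous operator on `λ(A)` obeys any weighted `ℓ¹` bound that holds on the unit
sequences. -/
lemma bound_of_image_unit {a b : ℕ → ℕ → ℝ} (ha : IsKotheMatrix a)
    {l : MonoBanachSeqSpace} {T : (ℕ → ℝ) → (ℕ → ℝ)}
    (hT : ∀ x, memLam a x → memLamL l b (T x))
    (hadd : ∀ x y, memLam a x → memLam a y → T (x + y) = T x + T y)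
    (hsmul : ∀ (c : ℝ) (x), memLam a x → T (c • x) = c • T x) {m r N₀ : ℕ} {M D : ℝ}
    (hD : 0 ≤ D)
    (hcont : ∀ x c, memLam a x → 0 < c → lamNorm a m x ≤ c → lamLNorm l b r (T x) ≤ M * c)
    (hunit : ∀ i, lamLNorm l b r (T (eSeq i)) ≤ D * a i N₀)
    (hM : 0 ≤ M) {x : ℕ → ℝ} (hx : memLam a x) :
    lamLNorm l b r (T x) ≤ D * lamNorm a N₀ x := by
  have hz : memLam a (0 : ℕ → ℝ) := by
    simpa using memLam_smul 0 (memLam_e a 0)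
  have hfin : ∀ F : Finset ℕ, memLam a (∑ n ∈ F, x n • eSeq n) ∧
      lamLNorm l b r (T (∑ n ∈ F, x n • eSeq n)) ≤ D * ∑ n ∈ F, |x n| * a n N₀ := by
    intro F
    induction F using Finset.induction_on with
    | empty =>
      refine ⟨by simpa using hz, ?_⟩
      have h0 := hsmul 0 0 hz
      rw [zero_smul, zero_smul] at h0
      have h1 := lamLNorm_smul (hT 0 hz) 0 r
      rw [zero_smul, abs_zero, zero_mul] at h1
      simp [h0, h1]
    | insert n F hn ih =>
      have hm := memLam_smul (x n) (memLam_e a n)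
      rw [Finset.sum_insert hn, Finset.sum_insert hn]
      refine ⟨memLam_add ha hm ih.1, ?_⟩
      rw [hadd _ _ hm ih.1]
      refine (lamLNorm_add (hT _ hm) (hT _ ih.1) r).trans ?_
      rw [hsmul _ _ (memLam_e a n), lamLNorm_smul (hT _ (memLam_e a n))]
      have := mul_le_mul_of_nonneg_left (hunit n) (abs_nonneg (x n))
      have := ih.2
      rw [mul_add]
      linarith
  refine le_of_forall_pos_le_add fun ε hε => ?_
  have hδ : 0 < ε / (M + 1) := div_pos hε (by linarith)
  obtain ⟨F, hmem, hle⟩ := exists_truncation ha hx m hδ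
  have h1 := hcont _ _ hmem hδ hle
  have h2 : M * (ε / (M + 1)) ≤ ε := by
    rw [← mul_div_assoc, div_le_iff₀ (by linarith)]
    nlinarith
  have h3 := lamLNorm_add (hT _ hmem) (hT _ (hfin F).1) r
  rw [← hadd _ _ hmem (hfin F).1, sub_add_cancel] at h3
  have h4 : ∑ n ∈ F, |x n| * a n N₀ ≤ lamNorm a N₀ x :=
    (hx N₀).sum_le_tsum _ fun n _ => mul_nonneg (abs_nonneg _) (ha n N₀).1.le
  have h5 := mul_le_mul_of_nonneg_left h4 hD
  have h6 := (hfin F).2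
  linarith

/-! ### Necessity: the gliding-hump operator -/

/-- The operator `∑ₛ tₛ e^*_{iₛ} ⊗ e_{vₛ}`, given coordinatewise; the series are only meaningful
on sequences for which they converge. -/
noncomputable def humpOp (t : ℕ → ℝ) (v i : ℕ → ℕ) (x : ℕ → ℝ) : ℕ → ℝ :=
  fun w => ∑' s, if v s = w then t s * x (i s) else 0

lemma humpOp_mul (t : ℕ → ℝ) (v i : ℕ → ℕ) (x : ℕ → ℝ) (b : ℕ → ℕ → ℝ) (k : ℕ) :
    (fun w => humpOp t v i x w * b w k) =
      fun w => ∑' s, if v s = w then t s * x (i s) * b (v s) k else 0 := by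
  funext w
  rw [humpOp, ← tsum_mul_right]
  refine tsum_congr fun s => ?_
  split_ifs with h
  · rw [h]
  · simp

/-- If the operator seminorms `tₛ b_{vₛ}^k / a_{iₛ}^m` of the rank-one pieces are summable, then so
are the `k`-th seminorms of the terms of the series for `humpOp t v i x`, with a bound by
`‖x‖_m`. -/
lemma hump_summable {a b : ℕ → ℕ → ℝ} (ha : IsKotheMatrix a) (hb : IsKotheMatrix b)
    {t : ℕ → ℝ} (ht : ∀ s, 0 < t s) {v i : ℕ → ℕ} {k m : ℕ}
    (hs : Summable fun s => t s * b (v s) k / a (i s) m) {x : ℕ → ℝ} (hx : memLam a x) :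
    (Summable fun s => |t s * x (i s) * b (v s) k|) ∧
      ∑' s, |t s * x (i s) * b (v s) k| ≤
        (∑' s, t s * b (v s) k / a (i s) m) * lamNorm a m x := by
  have hle : ∀ s, |t s * x (i s) * b (v s) k| ≤
      t s * b (v s) k / a (i s) m * lamNorm a m x := by
    intro s
    have hp := (ha (i s) m).1
    have hq : 0 ≤ t s * b (v s) k / a (i s) m :=
      div_nonneg (mul_nonneg (ht s).le (hb _ _).1.le) hp.le
    refine le_trans (le_of_eq ?_) (mul_le_mul_of_nonneg_left (coord_le_lamNorm ha hx m (i s)) hq)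
    rw [abs_mul, abs_mul, abs_of_pos (ht s), abs_of_pos (hb (v s) k).1]
    have := hp.ne'
    field_simp
  have hsum := Summable.of_nonneg_of_le (fun s => abs_nonneg _) hle
    (hs.mul_right (lamNorm a m x))
  refine ⟨hsum, ?_⟩
  rw [← tsum_mul_right]
  exact hsum.tsum_le_tsum hle (hs.mul_right _)

lemma hump_coord_summable {a b : ℕ → ℕ → ℝ} (ha : IsKotheMatrix a) (hb : IsKotheMatrix b)
    {t : ℕ → ℝ} (ht : ∀ s, 0 < t s) {v i : ℕ → ℕ} {k m : ℕ}
    (hs : Summable fun s => t s * b (v s) k / a (i s) m) {x : ℕ → ℝ} (hx : memLam a x)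
    (w : ℕ) : Summable fun s => if v s = w then t s * x (i s) else 0 := by
  have h := ((hump_summable ha hb ht hs hx).1.mul_right (b w k)⁻¹)
  refine Summable.of_norm_bounded h fun s => ?_
  have hp := (hb w k).1
  split_ifs with hv
  · rw [hv, abs_mul, abs_of_pos hp, mul_assoc, mul_inv_cancel₀ hp.ne', mul_one, Real.norm_eq_abs]
  · rw [norm_zero]
    exact mul_nonneg (abs_nonneg _) (inv_nonneg.2 hp.le)

/-- The entries of the image of a unit sequence under `humpOp` do not cancel, since all the
weights are positive. -/
lemma hump_lower {a b : ℕ → ℕ → ℝ} (ha : IsKotheMatrix a) (hb : IsKotheMatrix b)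
    {l : MonoBanachSeqSpace} {t : ℕ → ℝ} (ht : ∀ s, 0 < t s) {v i : ℕ → ℕ} {k m s₀ : ℕ}
    (hs : Summable fun s => t s * b (v s) k / a (i s) m)
    (hmem : memLamL l b (humpOp t v i (eSeq (i s₀)))) (r : ℕ) :
    t s₀ * b (v s₀) r ≤ lamLNorm l b r (humpOp t v i (eSeq (i s₀))) := by
  have h1 : t s₀ ≤ humpOp t v i (eSeq (i s₀)) (v s₀) := by
    have := (hump_coord_summable ha hb ht hs (memLam_e a (i s₀)) (v s₀)).le_tsum s₀
      fun s _ => by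
        split_ifs
        · refine mul_nonneg (ht s).le ?_
          rw [eSeq]; split_ifs <;> norm_num
        · exact le_rfl
    simpa [eSeq, humpOp] using this
  have h2 := coord_le l (hmem r) (v s₀)
  refine le_trans ?_ ((le_abs_self _).trans h2)
  exact mul_le_mul_of_nonneg_right h1 (hb _ _).1.le

/-- Summability of the operator seminorms of the pieces makes `humpOp` a continuous linear
operator, so that it is bounded as soon as every continuous operator is. -/
lemma hump_bounded {a b : ℕ → ℕ → ℝ} (ha : IsKotheMatrix a) (hb : IsKotheMatrix b)
    {l : MonoBanachSeqSpace}
    (hB : ∀ T : (ℕ → ℝ) → (ℕ → ℝ),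
        (∀ x, memLam a x → memLamL l b (T x)) →
        (∀ x y, memLam a x → memLam a y → T (x + y) = T x + T y) →
        (∀ (c : ℝ) (x), memLam a x → T (c • x) = c • T x) →
        (∀ k, ∃ m, opSeminorm (memLam a) (lamNorm a m) (lamLNorm l b k) T < ⊤) →
        ∃ N, ∀ r, opSeminorm (memLam a) (lamNorm a N) (lamLNorm l b r) T < ⊤)
    {t : ℕ → ℝ} (ht : ∀ s, 0 < t s) {v i : ℕ → ℕ}
    (hs : ∀ k, ∃ m, Summable fun s => t s * b (v s) k / a (i s) m) :
    ∃ n, ∀ r, ∃ M, ∀ s, t s * b (v s) r / a (i s) n ≤ M := by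
  have hmem : ∀ x, memLam a x → memLamL l b (humpOp t v i x) := by
    intro x hx k
    obtain ⟨m, hm⟩ := hs k
    rw [humpOp_mul]
    exact (mem_series l _ v (hump_summable ha hb ht hm hx).1).1
  have hsmul : ∀ (c : ℝ) (x), memLam a x → humpOp t v i (c • x) = c • humpOp t v i x := by
    intro c x _
    funext w
    simp only [humpOp, Pi.smul_apply, smul_eq_mul]
    rw [← tsum_mul_left]
    refine tsum_congr fun s => ?_
    split_ifs
    · ring
    · simp
  obtain ⟨m₀, hm₀⟩ := hs 0
  obtain ⟨n, hn⟩ := hB (humpOp t v i) hmem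
    (by
      intro x y hx hy
      funext w
      simp only [humpOp, Pi.add_apply]
      rw [← (hump_coord_summable ha hb ht hm₀ hx w).tsum_add
        (hump_coord_summable ha hb ht hm₀ hy w)]
      refine tsum_congr fun s => ?_
      split_ifs
      · ring
      · simp)
    hsmul
    (by
      intro k
      obtain ⟨m, hm⟩ := hs k
      refine ⟨m, opSeminorm_lt_top_of (∑' s, t s * b (v s) k / a (i s) m) fun x hx h1 => ?_⟩
      have h2 := hump_summable ha hb ht hm hx
      rw [lamLNorm, humpOp_mul]
      refine (mem_series l _ v h2.1).2.trans (h2.2.trans ?_)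
      refine mul_le_of_le_one_right (tsum_nonneg fun s => ?_) h1
      exact div_nonneg (mul_nonneg (ht s).le (hb _ _).1.le) (ha _ _).1.le)
  refine ⟨n, fun r => ?_⟩
  obtain ⟨M, -, hM⟩ := scaled_bound hmem hsmul (hn r)
  refine ⟨M, fun s => ?_⟩
  rw [div_le_iff₀ (ha _ _).1]
  exact (hump_lower ha hb ht hm₀ (hmem _ (memLam_e a _)) r).trans
    (hM _ _ (memLam_e a _) (ha _ _).1 (lamNorm_e a n (i s)).le)

/-- Theorem 1. `(λ(A), λ^ℓ(B)) ∈ 𝓑` iff for every sequence `N(k)` there is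
`N₀` such that for each `r` there are `k₀` and `C > 0` with
`b_v^r / a_i^{N₀} ≤ C · max_{1 ≤ k ≤ k₀} b_v^k / a_i^{N(k)}` for all `v`, `i`. -/
theorem B_pair_lambda_lambdaL_iff
    (a b : ℕ → ℕ → ℝ) (ha : IsKotheMatrix a) (hb : IsKotheMatrix b)
    (l : MonoBanachSeqSpace) :
    (∀ T : (ℕ → ℝ) → (ℕ → ℝ),
        (∀ x, memLam a x → memLamL l b (T x)) →
        (∀ x y, memLam a x → memLam a y → T (x + y) = T x + T y) →
        (∀ (c : ℝ) (x), memLam a x → T (c • x) = c • T x) →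
        (∀ k, ∃ m, opSeminorm (memLam a) (lamNorm a m) (lamLNorm l b k) T < ⊤) →
        ∃ N, ∀ r, opSeminorm (memLam a) (lamNorm a N) (lamLNorm l b r) T < ⊤) ↔
      (∀ N : ℕ → ℕ, ∃ N₀ : ℕ, ∀ r : ℕ, ∃ k₀ : ℕ, ∃ hk₀ : 1 ≤ k₀, ∃ C : ℝ, 0 < C ∧
        ∀ v i : ℕ, b v r / a i N₀ ≤ C * maxIcc k₀ hk₀ fun k => b v k / a i (N k)) := by
  constructor
  · intro hB N
    by_contra! hcon
    choose r hr using hcon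
    -- the pair `(vₛ, iₛ)` violates the inequality for `N₀ = (unpair s).1`, `k₀ = s + 1`, `C = 4ˢ`
    have hpick : ∀ s : ℕ, ∃ p : ℕ × ℕ, (4 : ℝ) ^ s *
        maxIcc (s + 1) (Nat.le_add_left 1 s) (fun k => b p.1 k / a p.2 (N k)) <
          b p.1 (r s.unpair.1) / a p.2 s.unpair.1 := by
      intro s
      obtain ⟨v, i, h⟩ := hr s.unpair.1 (s + 1) (Nat.le_add_left 1 s) (4 ^ s) (by positivity)
      exact ⟨(v, i), h⟩
    choose p hp using hpick
    set mx : ℕ → ℝ := fun s =>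
      maxIcc (s + 1) (Nat.le_add_left 1 s) fun k => b (p s).1 k / a (p s).2 (N k) with hmx
    have hle : ∀ s k, 1 ≤ k → k ≤ s + 1 → b (p s).1 k / a (p s).2 (N k) ≤ mx s := fun s k h1 h2 =>
      Finset.le_sup' (fun k => b (p s).1 k / a (p s).2 (N k)) (Finset.mem_Icc.2 ⟨h1, h2⟩)
    have hmxpos : ∀ s, 0 < mx s := fun s =>
      (div_pos (hb _ _).1 (ha _ _).1).trans_le (hle s 1 le_rfl (Nat.le_add_left 1 s))
    have ht : ∀ s, 0 < (1 / 2 : ℝ) ^ s / mx s := fun s => div_pos (by positivity) (hmxpos s)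
    have hsum1 : ∀ k, 1 ≤ k → Summable fun s =>
        (1 / 2 : ℝ) ^ s / mx s * b (p s).1 k / a (p s).2 (N k) := by
      intro k hk
      -- the bound by `2⁻ˢ` is available only for `s ≥ k`, which is enough for summability
      rw [← summable_nat_add_iff k]
      refine Summable.of_nonneg_of_le
        (fun s => div_nonneg (mul_nonneg (ht _).le (hb _ _).1.le) (ha _ _).1.le) (fun s => ?_)
        ((summable_nat_add_iff k).2 summable_geometric_two)
      rw [mul_div_assoc, div_mul_eq_mul_div, div_le_iff₀ (hmxpos _)]
      exact mul_le_mul_of_nonneg_left (hle _ k hk (by omega)) (by positivity)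
    have hsum : ∀ k, ∃ m, Summable fun s =>
        (1 / 2 : ℝ) ^ s / mx s * b (p s).1 k / a (p s).2 m := by
      intro k
      -- passing to `k + 1` covers `k = 0`, to which the maximum over `1 ≤ k` does not apply
      refine ⟨N (k + 1), Summable.of_nonneg_of_le
        (fun s => div_nonneg (mul_nonneg (ht _).le (hb _ _).1.le) (ha _ _).1.le) (fun s => ?_)
        (hsum1 (k + 1) (Nat.le_add_left 1 k))⟩
      exact div_le_div_of_nonneg_right
        (mul_le_mul_of_nonneg_left (hb _ _).2 (ht _).le) (ha _ _).1.le
    obtain ⟨n, hn⟩ := hump_bounded (v := fun s => (p s).1) (i := fun s => (p s).2) ha hb hB ht hsum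
    obtain ⟨M, hM⟩ := hn (r n)
    obtain ⟨j, hj⟩ := pow_unbounded_of_one_lt M (one_lt_two : (1 : ℝ) < 2)
    have h1 := hM (Nat.pair n j)
    have h2 := hp (Nat.pair n j)
    have h3 : (2 : ℝ) ^ j ≤ 2 ^ Nat.pair n j :=
      pow_le_pow_right₀ one_le_two (Nat.right_le_pair n j)
    simp only [Nat.unpair_pair] at h2
    set s := Nat.pair n j
    have h4 : (4 : ℝ) ^ s * mx s < b (p s).1 (r n) / a (p s).2 n := h2
    have h5 : (1 / 2 : ℝ) ^ s / mx s * (4 ^ s * mx s) = 2 ^ s := by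
      have := (hmxpos s).ne'
      rw [show (4 : ℝ) = 2 * 2 by norm_num, mul_pow, one_div, inv_pow]
      field_simp
    have h6 := mul_lt_mul_of_pos_left h4 (ht s)
    rw [h5, ← mul_div_assoc] at h6
    linarith
  · intro hcond T hT hadd hsmul hcont
    choose N hN using hcont
    choose M hM0 hM using fun k => scaled_bound hT hsmul (hN k)
    obtain ⟨N₀, hN₀⟩ := hcond N
    refine ⟨N₀, fun r => ?_⟩
    obtain ⟨k₀, hk₀, C, hC, hineq⟩ := hN₀ r
    have hD : 0 ≤ C * ∑ k ∈ Finset.Icc 1 k₀, M k :=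
      mul_nonneg hC.le (Finset.sum_nonneg fun k _ => hM0 k)
    refine opSeminorm_lt_top_of (C * ∑ k ∈ Finset.Icc 1 k₀, M k) fun x hx h1 => ?_
    refine (bound_of_image_unit ha hT hadd hsmul hD (hM r) (fun i => ?_) (hM0 r) hx).trans
      (mul_le_of_le_one_right hD h1)
    exact image_unit_bound ha hb hk₀ hC (fun v => hineq v i) (hT _ (memLam_e a i))
      fun k => hM k _ _ (memLam_e a i) (ha _ _).1 (lamNorm_e a (N k) i).le
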